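/- Let A = ℂ⟨u,v⟩ be the free associative ℂ-algebra on two generators u and v. There exists a unique double bracket db_K on A with db_K(u ⊗ v) = −(vu) ⊗ 1, db_K(v ⊗ u) = (uv) ⊗ 1, db_K(u ⊗ u) = 0, and db_K(v ⊗ v) = 0; moreover, db_K is a modified double Poisson bracket, i.e. with {a,b} := μ(db_K(a ⊗ b)) one has {a,{b,c}} − {b,{a,c}} = {{a,b},c} for all a,b,c ∈ A and {a,b} + {b,a} ∈ [A,A] for all a,b ∈ A. -/

import Mathlib

open TensorProduct

noncomputable section

/-- The free associative ℂ-algebra on two generators. -/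
abbrev FreeA2 : Type := FreeAlgebra ℂ (Fin 2)

/-- The generator `u`. -/
def genU : FreeA2 := FreeAlgebra.ι ℂ 0

/-- The generator `v`. -/
def genV : FreeA2 := FreeAlgebra.ι ℂ 1

/-- `db` is a double bracket: it satisfies the double Leibniz rules. -/
def IsDoubleBracket (db : FreeA2 ⊗[ℂ] FreeA2 →ₗ[ℂ] FreeA2 ⊗[ℂ] FreeA2) : Prop :=
  (∀ a b c : FreeA2, db (a ⊗ₜ[ℂ] (b * c)) =
    (b ⊗ₜ[ℂ] (1 : FreeA2)) * db (a ⊗ₜ[ℂ] c) + db (a ⊗ₜ[ℂ] b) * ((1 : FreeA2) ⊗ₜ[ℂ] c)) ∧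
  (∀ a b c : FreeA2, db ((a * b) ⊗ₜ[ℂ] c) =
    ((1 : FreeA2) ⊗ₜ[ℂ] a) * db (b ⊗ₜ[ℂ] c) + db (a ⊗ₜ[ℂ] c) * (b ⊗ₜ[ℂ] (1 : FreeA2)))

/-- The prescribed values of `db_K` on pairs of generators. -/
def KontsevichGenVals (db : FreeA2 ⊗[ℂ] FreeA2 →ₗ[ℂ] FreeA2 ⊗[ℂ] FreeA2) : Prop :=
  db (genU ⊗ₜ[ℂ] genV) = -((genV * genU) ⊗ₜ[ℂ] (1 : FreeA2)) ∧
  db (genV ⊗ₜ[ℂ] genU) = (genU * genV) ⊗ₜ[ℂ] (1 : FreeA2) ∧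
  db (genU ⊗ₜ[ℂ] genU) = 0 ∧
  db (genV ⊗ₜ[ℂ] genV) = 0


namespace KProof

/-- twisted derivations -/
def TD {B : Type} [Ring B] [Algebra ℂ B] (f g : FreeA2 →ₐ[ℂ] B) (D : FreeA2 →ₗ[ℂ] B) : Prop :=
  ∀ a b, D (a * b) = f a * D b + D a * g b

theorem TD.one {B : Type} [Ring B] [Algebra ℂ B] {f g : FreeA2 →ₐ[ℂ] B} {D : FreeA2 →ₗ[ℂ] B}
    (h : TD f g D) : D 1 = 0 := by
  have := h 1 1
  simpa using this

theorem TD.alg {B : Type} [Ring B] [Algebra ℂ B] {f g : FreeA2 →ₐ[ℂ] B} {D : FreeA2 →ₗ[ℂ] B}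
    (h : TD f g D) (r : ℂ) : D (algebraMap ℂ FreeA2 r) = 0 := by
  rw [Algebra.algebraMap_eq_smul_one, map_smul, h.one, smul_zero]

theorem TD.uniq {B : Type} [Ring B] [Algebra ℂ B] {f g : FreeA2 →ₐ[ℂ] B} {D E : FreeA2 →ₗ[ℂ] B}
    (h : TD f g D) (h' : TD f g E) (hu : D genU = E genU) (hv : D genV = E genV) : D = E := by
  ext a
  induction a using FreeAlgebra.induction with
  | grade0 r => rw [h.alg, h'.alg]
  | grade1 i => fin_cases i
                · exact hu
                · exact hv
  | mul a b ha hb => rw [h, h', ha, hb]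
  | add a b ha hb => rw [map_add, map_add, ha, hb]

theorem TD.exists {B : Type} [Ring B] [Algebra ℂ B] (f g : FreeA2 →ₐ[ℂ] B) (x y : B) :
    ∃ D : FreeA2 →ₗ[ℂ] B, TD f g D ∧ D genU = x ∧ D genV = y := by
  let F : FreeA2 →ₐ[ℂ] Matrix (Fin 2) (Fin 2) B := FreeAlgebra.lift ℂ
    (fun i : Fin 2 => !![f (FreeAlgebra.ι ℂ i), ![x, y] i; 0, g (FreeAlgebra.ι ℂ i)])
  have key : ∀ a, F a 0 0 = f a ∧ F a 1 0 = 0 ∧ F a 1 1 = g a := by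
    intro a
    induction a using FreeAlgebra.induction with
    | grade0 r => simp [Matrix.algebraMap_matrix_apply]
    | grade1 i => simp [F]
    | mul a b ha hb =>
      simp [Matrix.mul_apply, Fin.sum_univ_two, ha, hb]
    | add a b ha hb => simp [ha, hb]
  refine ⟨{ toFun := fun a => F a 0 1, map_add' := ?_, map_smul' := ?_ }, ?_, ?_, ?_⟩
  · intro a b; simp
  · intro r a; simp
  · intro a b
    simp [Matrix.mul_apply, Fin.sum_univ_two, key]
  · simp [F, genU]
  · simp [F, genV]

abbrev iL : FreeA2 →ₐ[ℂ] FreeA2 ⊗[ℂ] FreeA2 := Algebra.TensorProduct.includeLeft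
abbrev iR : FreeA2 →ₐ[ℂ] FreeA2 ⊗[ℂ] FreeA2 := Algebra.TensorProduct.includeRight
abbrev mu : FreeA2 ⊗[ℂ] FreeA2 →ₗ[ℂ] FreeA2 := LinearMap.mul' ℂ FreeA2

theorem iLR (a b : FreeA2) : iL a * iR b = iR b * iL a := by simp

def dU : FreeA2 →ₗ[ℂ] FreeA2 ⊗[ℂ] FreeA2 := (TD.exists iR iL 1 0).choose
def dV : FreeA2 →ₗ[ℂ] FreeA2 ⊗[ℂ] FreeA2 := (TD.exists iR iL 0 1).choose
theorem dU_td : TD iR iL dU := (TD.exists iR iL 1 0).choose_spec.1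
theorem dV_td : TD iR iL dV := (TD.exists iR iL 0 1).choose_spec.1
theorem dU_u : dU genU = 1 := (TD.exists iR iL 1 0).choose_spec.2.1
theorem dU_v : dU genV = 0 := (TD.exists iR iL 1 0).choose_spec.2.2
theorem dV_u : dV genU = 0 := (TD.exists iR iL 0 1).choose_spec.2.1
theorem dV_v : dV genV = 1 := (TD.exists iR iL 0 1).choose_spec.2.2

/-- abstract properties of the operators `L`. -/
structure IsL (L : FreeA2 →ₗ[ℂ] FreeA2 →ₗ[ℂ] FreeA2) : Prop where
  mul : ∀ z a b, L z (a * b) = L (z * a) b + L (b * z) a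

theorem exL (d : FreeA2 →ₗ[ℂ] FreeA2 ⊗[ℂ] FreeA2) (hd : TD iR iL d) :
    ∃ L : FreeA2 →ₗ[ℂ] FreeA2 →ₗ[ℂ] FreeA2, IsL L ∧ ∀ z a, L z a = mu (iR z * d a) := by
  refine ⟨LinearMap.mk₂ ℂ (fun z a => mu (iR z * d a)) ?_ ?_ ?_ ?_, ⟨?_⟩, ?_⟩
  · intro x y z; rw [map_add, add_mul, map_add]
  · intro c x y; rw [map_smul, smul_mul_assoc, map_smul]
  · intro x y z; rw [map_add, mul_add, map_add]
  · intro c x y; rw [map_smul, mul_smul_comm, map_smul]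
  · intro z a b
    simp only [LinearMap.mk₂_apply]
    rw [hd, mul_add, map_add, map_mul iR z a, mul_assoc]
    congr 1
    generalize d a = t
    induction t with
    | zero => simp
    | tmul x y => simp [mul_assoc]
    | add x y hx hy => simp only [mul_add, add_mul, map_add, hx, hy]
  · intro z a; rfl

def LU := (exL dU dU_td).choose
def LV := (exL dV dV_td).choose
theorem LU_is : IsL LU := (exL dU dU_td).choose_spec.1
theorem LV_is : IsL LV := (exL dV dV_td).choose_spec.1
theorem LU_eq (z a) : LU z a = mu (iR z * dU a) := (exL dU dU_td).choose_spec.2 z a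
theorem LV_eq (z a) : LV z a = mu (iR z * dV a) := (exL dV dV_td).choose_spec.2 z a
theorem LU_u (z) : LU z genU = z := by simp [LU_eq, dU_u]
theorem LU_v (z) : LU z genV = 0 := by simp [LU_eq, dU_v]
theorem LV_u (z) : LV z genU = 0 := by simp [LV_eq, dV_u]
theorem LV_v (z) : LV z genV = z := by simp [LV_eq, dV_v]

theorem IsL.one {L} (h : IsL L) (z) : L z 1 = 0 := by
  have := h.mul z 1 1
  simpa using this
theorem IsL.alg {L} (h : IsL L) (z) (r : ℂ) : L z (algebraMap ℂ FreeA2 r) = 0 := by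
  rw [Algebra.algebraMap_eq_smul_one, map_smul, h.one, smul_zero]

abbrev ID : FreeA2 →ₐ[ℂ] FreeA2 := AlgHom.id ℂ FreeA2
abbrev IsDer (D : FreeA2 →ₗ[ℂ] FreeA2) : Prop := TD ID ID D
theorem IsDer.mul {D} (h : IsDer D) (a b) : D (a * b) = a * D b + D a * b := h a b

abbrev T : Submodule ℂ FreeA2 :=
  Submodule.span ℂ {z : FreeA2 | ∃ x y : FreeA2, z = x * y - y * x}

theorem comm_mem (x y : FreeA2) : x * y - y * x ∈ T := Submodule.subset_span ⟨x, y, rfl⟩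

theorem IsL.cyc {L} (h : IsL L) {t} (ht : t ∈ T) : L 1 t = 0 := by
  induction ht using Submodule.span_induction with
  | mem x hx => obtain ⟨x, y, rfl⟩ := hx
                rw [map_sub, h.mul, h.mul]; simp [add_comm]
  | zero => simp
  | add x y _ _ hx hy => rw [map_add, hx, hy, add_zero]
  | smul c x _ hx => rw [map_smul, hx, smul_zero]

/-- trace formula -/
theorem trace_formula {D} (h : IsDer D) (b : FreeA2) : ∀ s,
    s * D b - (D genU * LU s b + D genV * LV s b) ∈ T := by
  induction b using FreeAlgebra.induction with
  | grade0 r => intro s; simp [h.alg, LU_is.alg, LV_is.alg]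
  | grade1 i =>
    intro s
    fin_cases i
    · change s * D genU - (D genU * LU s genU + D genV * LV s genU) ∈ T
      rw [LU_u, LV_u, mul_zero, add_zero]; exact comm_mem _ _
    · change s * D genV - (D genU * LU s genV + D genV * LV s genV) ∈ T
      rw [LU_v, LV_v, mul_zero, zero_add]; exact comm_mem _ _
  | mul c d hc hd =>
    intro s
    have := T.add_mem (T.add_mem (hc (d * s)) (hd (s * c))) (comm_mem (s * D c) d)
    convert this using 1
    rw [h.mul, LU_is.mul, LV_is.mul]; noncomm_ring
  | add c d hc hd =>
    intro s
    have := T.add_mem (hc s) (hd s)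
    convert this using 1
    simp only [map_add]; noncomm_ring

theorem tele (a : FreeA2) : ∀ s,
    genU * LU s a + genV * LV s a - (LU s a * genU + LV s a * genV) = a * s - s * a := by
  induction a using FreeAlgebra.induction with
  | grade0 r => intro s; simp [LU_is.alg, LV_is.alg, Algebra.commutes]
  | grade1 i =>
    intro s
    fin_cases i
    · change genU * LU s genU + genV * LV s genU - (LU s genU * genU + LV s genU * genV) = genU * s - s * genU
      simp [LU_u, LV_u]
    · change genU * LU s genV + genV * LV s genV - (LU s genV * genU + LV s genV * genV) = genV * s - s * genV
      simp [LU_v, LV_v]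
  | mul c d hc hd =>
    intro s
    have h1 := hc (d * s)
    have h2 := hd (s * c)
    rw [LU_is.mul, LV_is.mul]
    linear_combination (norm := noncomm_ring) h1 + h2
  | add c d hc hd =>
    intro s
    simp only [map_add]
    linear_combination (norm := noncomm_ring) hc s + hd s

theorem chain {L} (hL : IsL L) {c e : ℂ} (hc : ∀ z, L z genU = c • z)
    (he : ∀ z, L z genV = e • z) {D} (h : IsDer D) (b : FreeA2) : ∀ s,
    L s (D b) = D (L s b) - L (D s) b + L (LU s b) (D genU) + L (LV s b) (D genV) := by
  induction b using FreeAlgebra.induction with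
  | grade0 r => intro s; simp [h.alg, LU_is.alg, LV_is.alg, hL.alg]
  | grade1 i =>
    intro s
    fin_cases i
    · change L s (D genU) = D (L s genU) - L (D s) genU + L (LU s genU) (D genU) +
        L (LV s genU) (D genV)
      simp [LU_u, LV_u, hc]
    · change L s (D genV) = D (L s genV) - L (D s) genV + L (LU s genV) (D genU) +
        L (LV s genV) (D genV)
      simp [LU_v, LV_v, he]
  | mul c d hc hd =>
    intro s
    have h1 := hc (d * s)
    have h2 := hd (s * c)
    simp only [h.mul, hL.mul, LU_is.mul, LV_is.mul, map_add, LinearMap.add_apply] at h1 h2 ⊢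
    linear_combination (norm := noncomm_ring) h1 + h2
  | add c d hc hd =>
    intro s
    simp only [map_add, LinearMap.add_apply]
    linear_combination (norm := noncomm_ring) hc s + hd s


theorem flipL {L} (hL : IsL L) {c e : ℂ} (hc : ∀ z, L z genU = c • z)
    (he : ∀ z, L z genV = e • z) {D} (h : IsDer D) (a : FreeA2) :
    D (L 1 a) = L (D genU) (LU 1 a) + L (D genV) (LV 1 a) := by
  have h1 := chain hL hc he h a 1
  have h2 := hL.cyc (trace_formula h a 1)
  simp only [map_sub, map_add, hL.mul, one_mul, mul_one, h.one, map_zero, LinearMap.zero_apply]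
    at h1 h2
  linear_combination (norm := noncomm_ring) h2 - h1

theorem hUc (z : FreeA2) : LU z genU = (1 : ℂ) • z := by rw [LU_u, one_smul]
theorem hUe (z : FreeA2) : LU z genV = (0 : ℂ) • z := by rw [LU_v, zero_smul]
theorem hVc (z : FreeA2) : LV z genU = (0 : ℂ) • z := by rw [LV_u, zero_smul]
theorem hVe (z : FreeA2) : LV z genV = (1 : ℂ) • z := by rw [LV_v, one_smul]

/-- the key computation -/
theorem key {Da Db : FreeA2 →ₗ[ℂ] FreeA2} {a b : FreeA2} (ha : IsDer Da) (hb : IsDer Db)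
    (hau : Da genU = genU * genV * LV 1 a) (hav : Da genV = -(genV * genU * LU 1 a))
    (hbu : Db genU = genU * genV * LV 1 b) (hbv : Db genV = -(genV * genU * LU 1 b)) :
    Da (Db genU) - Db (Da genU) = genU * genV * LV 1 (Da b) ∧
    Da (Db genV) - Db (Da genV) = -(genV * genU * LU 1 (Da b)) := by
  obtain ⟨F, hF, hFu, hFv⟩ := TD.exists ID ID (-(LV 1 b * genV * genU)) (LU 1 b * genU * genV)
  have tb := tele b 1
  rw [one_mul, mul_one, sub_self] at tb
  let w : FreeA2 := genV * LV 1 b - LU 1 b * genU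
  have hE : F + Db = LinearMap.mulRight ℂ w - LinearMap.mulLeft ℂ w := by
    refine TD.uniq (f := ID) (g := ID) ?_ ?_ ?_ ?_
    · intro x y
      have h1 := hF x y
      have h2 := hb x y
      simp only [LinearMap.add_apply, h1, h2]
      noncomm_ring
    · intro x y
      simp only [LinearMap.sub_apply, LinearMap.mulRight_apply, LinearMap.mulLeft_apply,
        AlgHom.id_apply, ID, AlgHom.coe_id, id]
      noncomm_ring
    · simp only [LinearMap.add_apply, LinearMap.sub_apply, LinearMap.mulRight_apply,
        LinearMap.mulLeft_apply, hFu, hbu, w]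
      linear_combination (norm := noncomm_ring) tb * genU
    · simp only [LinearMap.add_apply, LinearMap.sub_apply, LinearMap.mulRight_apply,
        LinearMap.mulLeft_apply, hFv, hbv, w]
      linear_combination (norm := noncomm_ring) -genV * tb
  have hE' : ∀ x, F x + Db x = x * w - w * x := fun x => by
    have := LinearMap.congr_fun hE x
    simpa using this
  constructor
  · have f1 := flipL LV_is hVc hVe hF a
    have e1 := hE' (LV 1 a)
    have c1 := chain LV_is hVc hVe ha b 1
    rw [hau, hav] at c1
    rw [hFu, hFv] at f1
    simp only [LV_is.mul, map_neg, LinearMap.neg_apply, LV_u, LV_v, ha.one, map_zero,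
      LinearMap.zero_apply, mul_assoc] at c1 f1
    rw [hau, hbu, c1]
    simp only [ha.mul, hb.mul, hau, hav, hbu, hbv, mul_assoc]
    simp only [w] at e1
    linear_combination (norm := noncomm_ring) (genU * genV) * f1 - genU * genV * e1 +
      genU * genV * tb * LV 1 a
  · have f1 := flipL LU_is hUc hUe hF a
    have e1 := hE' (LU 1 a)
    have c1 := chain LU_is hUc hUe ha b 1
    rw [hau, hav] at c1
    rw [hFu, hFv] at f1
    simp only [LU_is.mul, map_neg, LinearMap.neg_apply, LU_u, LU_v, ha.one, map_zero,
      LinearMap.zero_apply, mul_assoc] at c1 f1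
    rw [hav, hbv, c1]
    simp only [ha.mul, hb.mul, hau, hav, hbu, hbv, mul_assoc, map_neg]
    simp only [w] at e1
    linear_combination (norm := noncomm_ring) -(genV * genU) * f1 + genV * genU * e1 +
      genV * genU * LU 1 a * tb

/-- antisymmetry on traces -/
theorem anti (u v p q p' q' : FreeA2) (h : u * q + v * p - (q * u + p * v) = 0)
    (h' : u * q' + v * p' - (q' * u + p' * v) = 0) :
    u * v * p * q' - v * u * q * p' + (u * v * p' * q - v * u * q' * p) ∈ T := by
  let τ := T.mkQ
  have hτ : ∀ x y : FreeA2, τ (x * y) = τ (y * x) := fun x y => by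
    rw [← sub_eq_zero, ← map_sub]
    exact (Submodule.Quotient.mk_eq_zero T).2 (comm_mem x y)
  have r : ∀ x y z t : FreeA2, τ (x * (y * (z * t))) = τ (y * (z * (t * x))) := fun x y z t => by
    rw [hτ]; simp only [mul_assoc]
  rw [← Submodule.Quotient.mk_eq_zero T]
  change τ _ = 0
  have a1 : τ ((u * q + v * p - (q * u + p * v)) * (q' * u)) = 0 := by rw [h, zero_mul, map_zero]
  have a2 : τ ((u * q + v * p - (q * u + p * v)) * (u * q')) = 0 := by rw [h, zero_mul, map_zero]
  have a3 : τ ((u * q + v * p - (q * u + p * v)) * (v * p')) = 0 := by rw [h, zero_mul, map_zero]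
  have a4 : τ ((u * q + v * p - (q * u + p * v)) * (p' * v)) = 0 := by rw [h, zero_mul, map_zero]
  have b1 : τ ((u * q' + v * p' - (q' * u + p' * v)) * (q * u)) = 0 := by
    rw [h', zero_mul, map_zero]
  have b2 : τ ((u * q' + v * p' - (q' * u + p' * v)) * (u * q)) = 0 := by
    rw [h', zero_mul, map_zero]
  have b3 : τ ((u * q' + v * p' - (q' * u + p' * v)) * (v * p)) = 0 := by
    rw [h', zero_mul, map_zero]
  have b4 : τ ((u * q' + v * p' - (q' * u + p' * v)) * (p * v)) = 0 := by
    rw [h', zero_mul, map_zero]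
  simp only [add_mul, sub_mul, map_add, map_sub, mul_assoc] at a1 a2 a3 a4 b1 b2 b3 b4 ⊢
  linear_combination (norm := module) (1 / 2 : ℂ) • (
    a1 + a2 - a3 - a4 + b1 + b2 - b3 - b4 + (2 : ℂ) • r u v p q' + (2 : ℂ) • r v p q' u + (-2
    : ℂ) • r v u q p' + (-2 : ℂ) • r u q p' v + (-2 : ℂ) • r q p' v u + (2 : ℂ) • r u v p' q +
    (2 : ℂ) • r v p' q u + (-2 : ℂ) • r v u q' p + (-2 : ℂ) • r u q' p v + (-2 : ℂ) • r q' p v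
    u + (-1 : ℂ) • r u q q' u + (-1 : ℂ) • r v p q' u + (-1 : ℂ) • r u q u q' + (-1 : ℂ) • r v
    p u q' + (1 : ℂ) • r u q v p' + (1 : ℂ) • r q v p' u + (1 : ℂ) • r v p' u q + (1 : ℂ) • r
    v p v p' + (-1 : ℂ) • r q u v p' + (-1 : ℂ) • r u v p' q + (-1 : ℂ) • r v p' q u + (1 : ℂ)
    • r u q p' v + (1 : ℂ) • r q p' v u + (1 : ℂ) • r v p p' v + (-1 : ℂ) • r q u p' v + (-1 :
    ℂ) • r u p' v q + (-1 : ℂ) • r u q' q u + (-1 : ℂ) • r q' q u u + (-1 : ℂ) • r v p' q u +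
    (1 : ℂ) • r q' u q u + (1 : ℂ) • r u q u q' + (-1 : ℂ) • r u q' u q + (-1 : ℂ) • r q' u q
    u + (-1 : ℂ) • r u q u q' + (-1 : ℂ) • r v p' u q + (1 : ℂ) • r q' u u q + (1 : ℂ) • r u u
    q q' + (1 : ℂ) • r u q q' u + (1 : ℂ) • r u q' v p + (1 : ℂ) • r q' v p u + (1 : ℂ) • r v
    p u q' + (1 : ℂ) • r v p' v p + (1 : ℂ) • r p' v p v + (1 : ℂ) • r v p v p' + (-1 : ℂ) • r
    q' u v p + (-1 : ℂ) • r u v p q' + (-1 : ℂ) • r v p q' u + (-1 : ℂ) • r p' v v p + (-1 :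
    ℂ) • r v v p p' + (-1 : ℂ) • r v p p' v + (1 : ℂ) • r u q' p v + (1 : ℂ) • r q' p v u + (1
    : ℂ) • r v p' p v + (1 : ℂ) • r p' p v v + (-1 : ℂ) • r q' u p v + (-1 : ℂ) • r u p v q' +
    (-1 : ℂ) • r p' v p v + (-1 : ℂ) • r v p v p')

theorem br_facts {db : FreeA2 ⊗[ℂ] FreeA2 →ₗ[ℂ] FreeA2 ⊗[ℂ] FreeA2}
    (h : IsDoubleBracket db) (hg : KontsevichGenVals db) (a : FreeA2) :
    IsDer (mu ∘ₗ db ∘ₗ TensorProduct.mk ℂ FreeA2 FreeA2 a) ∧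
    mu (db (a ⊗ₜ genU)) = genU * genV * LV 1 a ∧
    mu (db (a ⊗ₜ genV)) = -(genV * genU * LU 1 a) := by
  obtain ⟨h1, h2⟩ := h
  obtain ⟨g1, g2, g3, g4⟩ := hg
  have mL : ∀ x t, mu ((x ⊗ₜ[ℂ] (1 : FreeA2)) * t) = x * mu t := by
    intro x t
    induction t with
    | zero => simp
    | tmul y z => simp [mul_assoc]
    | add y z hy hz => rw [mul_add, map_add, hy, hz, map_add, mul_add]
  have mR : ∀ x t, mu (t * ((1 : FreeA2) ⊗ₜ[ℂ] x)) = mu t * x := by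
    intro x t
    induction t with
    | zero => simp
    | tmul y z => simp [mul_assoc]
    | add y z hy hz => rw [add_mul, map_add, hy, hz, map_add, add_mul]
  refine ⟨?_, ?_, ?_⟩
  · intro x y
    simp only [LinearMap.comp_apply, TensorProduct.mk_apply, h1, map_add, mL, mR]
    rfl
  · have : db ∘ₗ (TensorProduct.mk ℂ FreeA2 FreeA2).flip genU =
        LinearMap.mulLeft ℂ ((genU * genV) ⊗ₜ[ℂ] (1 : FreeA2)) ∘ₗ dV := by
      refine TD.uniq (f := iR) (g := iL) ?_ ?_ ?_ ?_
      · intro x y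
        simp [h2]
      · intro x y
        have := dV_td x y
        have e := iLR (genU * genV) x
        simp only [LinearMap.comp_apply, LinearMap.mulLeft_apply, this, mul_add, ← mul_assoc]
        change iL (genU * genV) * iR x * _ + _ = _
        rw [e]; rfl
      · simp [g3, dV_u]
      · simp [g2, dV_v]
    have h3 := LinearMap.congr_fun this a
    simp only [LinearMap.comp_apply, LinearMap.flip_apply, TensorProduct.mk_apply,
      LinearMap.mulLeft_apply] at h3
    rw [h3, mL, LV_eq, map_one, one_mul]
  · have : db ∘ₗ (TensorProduct.mk ℂ FreeA2 FreeA2).flip genV =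
        LinearMap.mulLeft ℂ ((-(genV * genU)) ⊗ₜ[ℂ] (1 : FreeA2)) ∘ₗ dU := by
      refine TD.uniq (f := iR) (g := iL) ?_ ?_ ?_ ?_
      · intro x y
        simp [h2]
      · intro x y
        have := dU_td x y
        have e := iLR (-(genV * genU)) x
        simp only [LinearMap.comp_apply, LinearMap.mulLeft_apply, this, mul_add, ← mul_assoc]
        change iL (-(genV * genU)) * iR x * _ + _ = _
        rw [e]; rfl
      · simp [g1, dU_u, TensorProduct.neg_tmul]
      · simp [g4, dU_v]
    have h3 := LinearMap.congr_fun this a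
    simp only [LinearMap.comp_apply, LinearMap.flip_apply, TensorProduct.mk_apply,
      LinearMap.mulLeft_apply] at h3
    rw [h3, mL, LU_eq, map_one, one_mul, neg_mul]

theorem td_second (db : FreeA2 ⊗[ℂ] FreeA2 →ₗ[ℂ] FreeA2 ⊗[ℂ] FreeA2)
    (h : IsDoubleBracket db) (a : FreeA2) : TD iL iR (db ∘ₗ TensorProduct.mk ℂ FreeA2 FreeA2 a) :=
  fun x y => h.1 a x y

theorem td_first (db : FreeA2 ⊗[ℂ] FreeA2 →ₗ[ℂ] FreeA2 ⊗[ℂ] FreeA2)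
    (h : IsDoubleBracket db) (c : FreeA2) :
    TD iR iL (db ∘ₗ (TensorProduct.mk ℂ FreeA2 FreeA2).flip c) :=
  fun x y => h.2 x y c

theorem uniq {db db' : FreeA2 ⊗[ℂ] FreeA2 →ₗ[ℂ] FreeA2 ⊗[ℂ] FreeA2}
    (h : IsDoubleBracket db) (hg : KontsevichGenVals db)
    (h' : IsDoubleBracket db') (hg' : KontsevichGenVals db') : db = db' := by
  obtain ⟨g1, g2, g3, g4⟩ := hg
  obtain ⟨k1, k2, k3, k4⟩ := hg'
  have hu := TD.uniq (td_first db h genU) (td_first db' h' genU)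
    (by simp [g3, k3]) (by simp [g2, k2])
  have hv := TD.uniq (td_first db h genV) (td_first db' h' genV)
    (by simp [g1, k1]) (by simp [g4, k4])
  refine TensorProduct.ext' fun a b => ?_
  exact LinearMap.congr_fun (TD.uniq (td_second db h a) (td_second db' h' a)
    (LinearMap.congr_fun hu a) (LinearMap.congr_fun hv a)) b

theorem exist : ∃ db : FreeA2 ⊗[ℂ] FreeA2 →ₗ[ℂ] FreeA2 ⊗[ℂ] FreeA2,
    IsDoubleBracket db ∧ KontsevichGenVals db := by
  let X : FreeA2 →ₗ[ℂ] FreeA2 ⊗[ℂ] FreeA2 := LinearMap.mulLeft ℂ (iL (genU * genV)) ∘ₗ dV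
  let Y : FreeA2 →ₗ[ℂ] FreeA2 ⊗[ℂ] FreeA2 := LinearMap.mulLeft ℂ (iL (-(genV * genU))) ∘ₗ dU
  have hX : TD iR iL X := by
    intro x y
    simp only [X, LinearMap.comp_apply, LinearMap.mulLeft_apply, dV_td x y, mul_add, ← mul_assoc]
    rw [iLR]
  have hY : TD iR iL Y := by
    intro x y
    simp only [Y, LinearMap.comp_apply, LinearMap.mulLeft_apply, dU_td x y, mul_add, ← mul_assoc]
    rw [iLR]
  choose G hG hGu hGv using fun a => TD.exists iL iR (X a) (Y a)
  let db : FreeA2 →ₗ[ℂ] FreeA2 →ₗ[ℂ] FreeA2 ⊗[ℂ] FreeA2 :=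
    { toFun := G
      map_add' := fun a b => by
        refine TD.uniq (hG _) ?_ ?_ ?_
        · intro x y
          simp only [LinearMap.add_apply, hG a x y, hG b x y]
          noncomm_ring
        · simp [hGu]
        · simp [hGv]
      map_smul' := fun r a => by
        refine TD.uniq (hG _) ?_ ?_ ?_
        · intro x y
          simp only [LinearMap.smul_apply, hG a x y, smul_add, RingHom.id_apply,
            mul_smul_comm, smul_mul_assoc]
        · simp [hGu]
        · simp [hGv] }
  refine ⟨TensorProduct.lift db, ⟨?_, ?_⟩, ?_, ?_, ?_, ?_⟩
  · intro a b c
    simp only [TensorProduct.lift.tmul]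
    exact hG a b c
  · intro a b c
    simp only [TensorProduct.lift.tmul]
    have : G (a * b) = LinearMap.mulLeft ℂ (iR a) ∘ₗ G b + LinearMap.mulRight ℂ (iL b) ∘ₗ G a := by
      refine TD.uniq (hG _) ?_ ?_ ?_
      · intro x y
        simp only [LinearMap.add_apply, LinearMap.comp_apply, LinearMap.mulLeft_apply,
          LinearMap.mulRight_apply, hG a x y, hG b x y]
        have e1 := iLR x a
        have e2 := iLR b y
        simp only [mul_add, add_mul, mul_assoc, e2]
        simp only [← mul_assoc, e1]
        simp only [mul_assoc, ← e2]
        abel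
      · simp [hGu, hX a b]
      · simp [hGv, hY a b]
    exact LinearMap.congr_fun this c
  · simp only [TensorProduct.lift.tmul]
    exact (hGv genU).trans (by simp [Y, dU_u, TensorProduct.neg_tmul])
  · simp only [TensorProduct.lift.tmul]
    exact (hGu genV).trans (by simp [X, dV_v])
  · simp only [TensorProduct.lift.tmul]
    exact (hGu genU).trans (by simp [X, dV_u])
  · simp only [TensorProduct.lift.tmul]
    exact (hGv genV).trans (by simp [Y, dU_v])

end KProof

/-- There is a unique double bracket `db_K` on `ℂ⟨u,v⟩` with the
prescribed values on generators, and it is a modified double Poisson bracket. -/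
theorem stmt10 :
    (∃! db : FreeA2 ⊗[ℂ] FreeA2 →ₗ[ℂ] FreeA2 ⊗[ℂ] FreeA2,
      IsDoubleBracket db ∧ KontsevichGenVals db) ∧
    (∀ db : FreeA2 ⊗[ℂ] FreeA2 →ₗ[ℂ] FreeA2 ⊗[ℂ] FreeA2,
      IsDoubleBracket db ∧ KontsevichGenVals db →
      (∀ a b c : FreeA2,
        LinearMap.mul' ℂ FreeA2 (db (a ⊗ₜ[ℂ] LinearMap.mul' ℂ FreeA2 (db (b ⊗ₜ[ℂ] c)))) -
        LinearMap.mul' ℂ FreeA2 (db (b ⊗ₜ[ℂ] LinearMap.mul' ℂ FreeA2 (db (a ⊗ₜ[ℂ] c)))) =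
        LinearMap.mul' ℂ FreeA2 (db (LinearMap.mul' ℂ FreeA2 (db (a ⊗ₜ[ℂ] b)) ⊗ₜ[ℂ] c))) ∧
      (∀ a b : FreeA2,
        LinearMap.mul' ℂ FreeA2 (db (a ⊗ₜ[ℂ] b)) + LinearMap.mul' ℂ FreeA2 (db (b ⊗ₜ[ℂ] a)) ∈
        Submodule.span ℂ {z : FreeA2 | ∃ x y : FreeA2, z = x * y - y * x})) := by

  open KProof in
  refine ⟨?_, ?_⟩
  · obtain ⟨db, h, hg⟩ := KProof.exist
    exact ⟨db, ⟨h, hg⟩, fun db' h' => uniq h'.1 h'.2 h hg⟩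
  · rintro db ⟨h, hg⟩
    have F := br_facts h hg
    constructor
    · intro a b c
      obtain ⟨ha, hau, hav⟩ := F a
      obtain ⟨hb, hbu, hbv⟩ := F b
      obtain ⟨hc, hcu, hcv⟩ := F (mu (db (a ⊗ₜ b)))
      have k := key ha hb hau hav hbu hbv
      let Da := mu ∘ₗ db ∘ₗ TensorProduct.mk ℂ FreeA2 FreeA2 a
      let Db := mu ∘ₗ db ∘ₗ TensorProduct.mk ℂ FreeA2 FreeA2 b
      have e := TD.uniq (f := ID) (g := ID) (D := Da ∘ₗ Db - Db ∘ₗ Da) ?_ hc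
        (k.1.trans hcu.symm) (k.2.trans hcv.symm)
      · exact LinearMap.congr_fun e c
      · intro x y
        have ha' : ∀ x y, Da (x * y) = x * Da y + Da x * y := ha
        have hb' : ∀ x y, Db (x * y) = x * Db y + Db x * y := hb
        simp only [LinearMap.sub_apply, LinearMap.comp_apply Da Db, LinearMap.comp_apply Db Da,
          ha', hb', map_add, AlgHom.coe_id, id]
        noncomm_ring
    · intro a b
      obtain ⟨ha, hau, hav⟩ := F a
      obtain ⟨hb, hbu, hbv⟩ := F b
      have ta := tele a 1
      have tb := tele b 1
      rw [one_mul, mul_one, sub_self] at ta tb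
      have t1 := trace_formula ha b 1
      have t2 := trace_formula hb a 1
      have t3 := anti genU genV (LV 1 a) (LU 1 a) (LV 1 b) (LU 1 b) ta tb
      simp only [LinearMap.comp_apply, TensorProduct.mk_apply, one_mul, hau, hav, hbu, hbv] at t1 t2
      have := T.add_mem (T.add_mem t1 t2) t3
      convert this using 1
      noncomm_ring

end
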